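/- Let q ≥ 1 and let T be a (q+1)-regular tree: a simple graph on a vertex set V that is connected and acyclic, in which every vertex has exactly q + 1 neighbors. Let A be an abelian group. Let F₀(E, A) be the group of functions f from ordered darts (v,w) (with v adjacent to w) to A satisfying f(w,v) = −f(v,w), and let F(V, A) be the group of all functions V → A. Then the map h : F₀(E, A) → F(V, A) defined by h(f)(v) = Σ_{w adjacent to v} f(v,w) is surjective. Consequently the sequence 0 → HC(A) → F₀(E, A) → F(V, A) → 0 is exact, where HC(A) = ker h is the group of A-valued harmonic cocycles. -/

import Mathlib

open SimpleGraph

/-- The group `F₀(E, A)` of `A`-valued functions on the darts (ordered edges) of a graph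
`G` that are odd under orientation reversal: `f(w,v) = -f(v,w)`. -/
def oddDartFunctions {V : Type*} (G : SimpleGraph V) (A : Type*) [AddCommGroup A] :
    AddSubgroup (G.Dart → A) where
  carrier := {f | ∀ d : G.Dart, f d.symm = - f d}
  add_mem' := by
    intro a b ha hb d
    simp only [Pi.add_apply, ha d, hb d]
    abel
  zero_mem' := by intro d; simp
  neg_mem' := by
    intro a ha d
    simp [Pi.neg_apply, ha d]

/-- The map `h : F₀(E, A) → F(V, A)`, `h(f)(v) = ∑_{w ~ v} f(v, w)`. -/
noncomputable def dartSum {V : Type*} (G : SimpleGraph V) [DecidableRel G.Adj]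
    [G.LocallyFinite] (A : Type*) [AddCommGroup A] :
    oddDartFunctions G A →+ (V → A) where
  toFun f := fun v => ∑ w ∈ (G.neighborFinset v).attach,
    (f : G.Dart → A) ⟨(v, (w : V)), by
      have h := w.2
      rw [SimpleGraph.mem_neighborFinset] at h
      exact h⟩
  map_zero' := by
    funext v
    simp
  map_add' := by
    intro a b
    funext v
    simp [Finset.sum_add_distrib]

/-- In a tree, a vertex has at most one neighbour closer to the root. -/
theorem parent_unique_aux {V : Type*} (G : SimpleGraph V) (htree : G.IsTree) (r v a b : V)
    (ha : G.Adj a v) (hb : G.Adj b v) (hda : G.dist r v = G.dist r a + 1)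
    (hdb : G.dist r v = G.dist r b + 1) : a = b := by
  obtain ⟨p, hp⟩ := htree.connected.exists_walk_length_eq_dist r a
  obtain ⟨p', hp'⟩ := htree.connected.exists_walk_length_eq_dist r b
  have h1 : (p.concat ha).IsPath :=
    Walk.isPath_of_length_eq_dist _ (by rw [Walk.length_concat, hp, hda])
  have h2 : (p'.concat hb).IsPath :=
    Walk.isPath_of_length_eq_dist _ (by rw [Walk.length_concat, hp', hdb])
  have h3 := (htree.existsUnique_path r v).unique h1 h2
  obtain ⟨h, _⟩ := Walk.concat_inj h3
  exact h

/-- The flow received by a vertex from its parent, computed up to depth `n`. -/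
noncomputable def flowAux {V A : Type*} [AddCommGroup A] (G : SimpleGraph V)
    [G.LocallyFinite] (c : V → V) (g : V → A) : ℕ → V → A
  | 0, _ => 0
  | n + 1, v => by
      classical
      exact ∑ w ∈ G.neighborFinset v, if v = c w then g w + flowAux G c g n w else 0

theorem dartSum_surjective_aux {V A : Type*} [AddCommGroup A] (q : ℕ) (hq : 1 ≤ q)
    (G : SimpleGraph V) [DecidableRel G.Adj] [G.LocallyFinite]
    (htree : G.IsTree) (hdeg : ∀ v : V, G.degree v = q + 1) :
    Function.Surjective (dartSum G A) := by
  classical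
  intro g
  obtain ⟨r⟩ := htree.connected.nonempty
  have hchild : ∀ v, ∃ w, G.Adj v w ∧ G.dist r w = G.dist r v + 1 := by
    intro v
    have h1 : 1 < (G.neighborFinset v).card := by
      rw [G.card_neighborFinset_eq_degree, hdeg]; omega
    obtain ⟨a, ha, b, hb, hab⟩ := Finset.one_lt_card.mp h1
    rw [SimpleGraph.mem_neighborFinset] at ha hb
    rcases htree.dist_eq_dist_add_one_of_adj r ha with h | h
    · rcases htree.dist_eq_dist_add_one_of_adj r hb with h' | h'
      · exact absurd (parent_unique_aux G htree r v a b ha.symm hb.symm h h') hab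
      · exact ⟨b, hb, h'⟩
    · exact ⟨a, ha, h⟩
  choose c hc hcd using hchild
  let x : V → A := fun v => flowAux G c g (G.dist r v) v
  have hx : ∀ v, x v = ∑ w ∈ G.neighborFinset v, if v = c w then g w + x w else 0 := by
    intro v
    rcases hn : G.dist r v with _ | n
    · have h0 : x v = 0 := by simp only [x, hn, flowAux]
      rw [h0, Finset.sum_eq_zero]
      intro w _
      rw [if_neg]
      rintro rfl
      have := hcd w
      omega
    · have h0 : x v = flowAux G c g (n + 1) v := by simp only [x, hn]
      rw [h0, flowAux]
      refine Finset.sum_congr rfl fun w _ => ?_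
      by_cases h : v = c w
      · have := hcd w
        rw [← h] at this
        have hw : G.dist r w = n := by omega
        simp only [x, hw, if_pos h]
      · simp only [if_neg h]
  let F : V → V → A := fun v w =>
    (if w = c v then g v + x v else 0) - (if v = c w then g w + x w else 0)
  refine ⟨⟨fun d => F d.fst d.snd, fun d => ?_⟩, ?_⟩
  · simp [F]
  · funext v
    change ∑ w ∈ (G.neighborFinset v).attach, F v w = g v
    rw [Finset.sum_attach (G.neighborFinset v) (F v)]
    simp only [F]
    rw [Finset.sum_sub_distrib, ← hx v, Finset.sum_ite_eq', if_pos]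
    · abel
    · rw [SimpleGraph.mem_neighborFinset]; exact hc v

/-- Let `q ≥ 1` and let `G` be a `(q+1)`-regular tree (connected,
acyclic, every vertex of degree `q + 1`), and let `A` be an abelian group.  Then the map
`h : F₀(E, A) → F(V, A)`, `h(f)(v) = ∑_{w ~ v} f(v,w)`, is surjective; consequently
`0 → HC(A) → F₀(E, A) → F(V, A) → 0` is exact, where `HC(A) = ker h` is the group of
`A`-valued harmonic cocycles. -/
theorem harmonic_cocycles_ses {V A : Type*} [AddCommGroup A] (q : ℕ) (hq : 1 ≤ q)
    (G : SimpleGraph V) [DecidableRel G.Adj] [G.LocallyFinite]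
    (htree : G.IsTree) (hdeg : ∀ v : V, G.degree v = q + 1) :
    Function.Surjective (dartSum G A) ∧
    Function.Exact ((AddMonoidHom.ker (dartSum G A)).subtype) (dartSum G A) ∧
    Function.Injective ((AddMonoidHom.ker (dartSum G A)).subtype) := by
  refine ⟨dartSum_surjective_aux q hq G htree hdeg, ?_, Subtype.val_injective⟩
  intro y
  constructor
  · intro hy
    exact ⟨⟨y, hy⟩, rfl⟩
  · rintro ⟨z, rfl⟩
    exact z.2
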